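/- For every m ≥ 0 and the binary word w = (000111)^m (the m-fold repetition of 000111), there exists r ≥ 0 such that occ(w, (0011)^r) = maxocc(w); that is, some most frequent subword of (000111)^m has the form (0011)^r. -/

import Mathlib

open List Real

/-- `occ w u` is the number of occurrences of `u` as a subword (subsequence) of `w`,
i.e. the multiplicity of `u` among the `2^|w|` sublists of `w`. -/
def occ {α : Type*} [DecidableEq α] (w u : List α) : ℕ := w.sublists.count u

/-- `maxocc w` is the maximal number of occurrences of any subword of `w`. -/
noncomputable def maxocc {α : Type*} [DecidableEq α] (w : List α) : ℕ :=
  sSup {n : ℕ | ∃ u : List α, occ w u = n}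

/-- `rep v m` is the concatenation of `m` copies of the word `v`. -/
def rep {α : Type*} (v : List α) (m : ℕ) : List α := (List.replicate m v).flatten

/-!
Write `w m = (0^k 1^l)^m`. For every word `u` there is a polynomial `F` in one variable `X` with
nonnegative coefficients `F_j` such that `occ (w m) u = ∑ j, F_j * (m choose j)` for all `m`: the
exponent of `X` counts the blocks that an occurrence of `u` really meets. A run of length `a + 1`
contributes a factor `q a`, where `∑ a, q a * t ^ (a + 1) = s / (1 - X s)` with
`s = (1 + t) ^ k - 1` for zeros and `s = (1 + t) ^ l - 1` for ones; a pair of runs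
`0^(a+1) 1^(b+1)` multiplies `F` by `X (1 + X) (q a) (q b)`, while an initial run of ones or a
final run of zeros multiplies it by `X (q a)`.

Now let `k = l = 3`, so that the polynomial of `(0011)^r` is `T ^ r` with
`T = X (1 + X) (q 1) ^ 2`. It suffices to bound every `F` coefficientwise by a combination of powers
of `T` with weights of sum at most `1`, because then `occ (w m) u` is at most the largest of the
numbers `occ (w m) ((0011)^r)`. Such bounds are stable under products, so only the factors have to
be bounded: `q 0 ≤ q 1`, `2 (q 2) ≤ q 1 (1 + T)`, `2 X (q 1) ≤ 1 + T`, and for the remaining `q a`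
the recurrence `q (a + 3) = X (3 q (a + 2) + 3 q (a + 1) + q a)` together with `9 X ≤ T` gives a
bound of weight `7 / 9` relative to `q 1`.
-/

open Polynomial
open Finset.HasAntidiagonal (antidiagonal)

section Occ

variable {α : Type*} [DecidableEq α]

lemma occ_nil_right (w : List α) : occ w [] = 1 := by
  rw [occ, (sublists_perm_sublists' w).count_eq]
  induction w with
  | nil => simp
  | cons a w ih => simp [sublists'_cons, ih, count_eq_zero]

lemma occ_nil_cons (b : α) (u : List α) : occ [] (b :: u) = 0 := by
  simp [occ]

lemma occ_cons_cons (a b : α) (w u : List α) :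
    occ (a :: w) (b :: u) = occ w (b :: u) + if a = b then occ w u else 0 := by
  simp only [occ, (sublists_perm_sublists' _).count_eq, sublists'_cons, count_append]
  congr 1
  split_ifs with h
  · rw [h, count_map_of_injective _ _ cons_injective]
  · simp [count_eq_zero, h]

lemma occ_cons_cons_self (c : α) (w u : List α) :
    occ (c :: w) (c :: u) = occ w (c :: u) + occ w u := by
  rw [occ_cons_cons, if_pos rfl]

lemma occ_cons_of_head?_ne {c : α} {u : List α} (hu : u.head? ≠ some c) (w : List α) :
    occ (c :: w) u = occ w u := by
  cases u with
  | nil => simp only [occ_nil_right]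
  | cons b u =>
    have hcb : c ≠ b := by rintro rfl; exact hu rfl
    rw [occ_cons_cons, if_neg hcb, add_zero]

lemma occ_replicate_append_of_head?_ne {c : α} {u : List α} (hu : u.head? ≠ some c) (k : ℕ)
    (w : List α) : occ (replicate k c ++ w) u = occ w u := by
  induction k with
  | zero => rfl
  | succ k ih => rw [replicate_succ, cons_append, occ_cons_of_head?_ne hu, ih]

lemma occ_replicate_append_replicate_append {c : α} {u : List α} (hu : u.head? ≠ some c)
    (k a : ℕ) (w : List α) :
    occ (replicate k c ++ w) (replicate a c ++ u) =
      ∑ ij ∈ antidiagonal a, k.choose ij.1 * occ w (replicate ij.2 c ++ u) := by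
  induction k generalizing a with
  | zero =>
    cases a <;> simp [Finset.Nat.antidiagonal_succ]
  | succ k ih =>
    cases a with
    | zero => simp [occ_replicate_append_of_head?_ne hu]
    | succ a =>
      have first_letter : occ (replicate (k + 1) c ++ w) (replicate (a + 1) c ++ u) =
          occ (replicate k c ++ w) (replicate (a + 1) c ++ u) +
            occ (replicate k c ++ w) (replicate a c ++ u) := occ_cons_cons_self ..
      rw [first_letter, ih, ih]
      simp only [Finset.Nat.sum_antidiagonal_succ, Nat.choose_zero_right, Nat.choose_succ_succ',
        add_mul, Finset.sum_add_distrib]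
      ring

lemma occ_le_two_pow_length (w u : List α) : occ w u ≤ 2 ^ w.length :=
  count_le_length.trans_eq (length_sublists w)

lemma exists_forall_occ_le {ι : Type*} [Nonempty ι] (w : List α) (v : ι → List α) :
    ∃ i, ∀ j, occ w (v j) ≤ occ w (v i) := by
  have finite_range : (Set.range fun i => occ w (v i)).Finite :=
    (Set.finite_Iic (2 ^ w.length)).subset
      (Set.range_subset_iff.mpr fun i => occ_le_two_pow_length w (v i))
  obtain ⟨_, ⟨i, rfl⟩, hi⟩ := Set.exists_max_image _ id finite_range (Set.range_nonempty _)
  exact ⟨i, fun j => hi _ ⟨j, rfl⟩⟩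

lemma maxocc_eq_of_forall_occ_le {w v : List α} (h : ∀ u, occ w u ≤ occ w v) :
    maxocc w = occ w v :=
  IsGreatest.csSup_eq ⟨⟨v, rfl⟩, by rintro _ ⟨u, rfl⟩; exact h u⟩

end Occ

section ChooseEval

/-- The linear functional on polynomials that sends `X ^ j` to `m.choose j`. As `m` varies,
multiplication by `X` corresponds to indefinite summation in `m`. -/
noncomputable def chooseEval (m : ℕ) : ℚ≥0[X] →ₗ[ℚ≥0] ℚ≥0 :=
  Polynomial.lsum fun j => (m.choose j : ℚ≥0) • LinearMap.id

lemma chooseEval_monomial (m j : ℕ) (a : ℚ≥0) :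
    chooseEval m (monomial j a) = m.choose j * a := by
  simp [chooseEval, sum_monomial_index]

lemma chooseEval_one (m : ℕ) : chooseEval m 1 = 1 := by
  simpa using chooseEval_monomial m 0 1

lemma chooseEval_zero_X_mul (p : ℚ≥0[X]) : chooseEval 0 (X * p) = 0 := by
  induction p using Polynomial.induction_on' with
  | add p q hp hq => rw [mul_add, map_add, hp, hq, add_zero]
  | monomial j a => rw [X_mul_monomial, chooseEval_monomial]; simp

lemma chooseEval_succ_X_mul (m : ℕ) (p : ℚ≥0[X]) :
    chooseEval (m + 1) (X * p) = chooseEval m (X * p) + chooseEval m p := by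
  induction p using Polynomial.induction_on' with
  | add p q hp hq => simp only [mul_add, map_add, hp, hq]; ring
  | monomial j a =>
    simp only [X_mul_monomial, chooseEval_monomial, Nat.choose_succ_succ', Nat.cast_add]
    ring

lemma chooseEval_natCast_mul (m n : ℕ) (p : ℚ≥0[X]) :
    chooseEval m (n * p) = n * chooseEval m p := by
  rw [← nsmul_eq_mul, map_nsmul, nsmul_eq_mul]

end ChooseEval

section RunPoly

/-- The factor that a run of length `a + 1` contributes to the polynomial of a word, when the blocks
of the ambient word contain runs of length `k`. The coefficient of `X ^ n` is the number of ways to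
choose the `a + 1` letters from `n + 1` given runs, at least one letter from each; the recursion
removes the letters taken from the first of these runs. -/
noncomputable def runPoly (k : ℕ) (a : ℕ) : ℚ≥0[X] :=
  (k.choose (a + 1) : ℚ≥0[X]) + X * ∑ j : Fin a, (k.choose (a - j) : ℚ≥0[X]) * runPoly k j
termination_by a
decreasing_by exact j.2

lemma runPoly_eq (k a : ℕ) :
    runPoly k a = (k.choose (a + 1) : ℚ≥0[X]) +
      X * ∑ j ∈ Finset.range a, (k.choose (a - j) : ℚ≥0[X]) * runPoly k j := by
  rw [runPoly, Finset.sum_range]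

lemma eq_chooseEval_runPoly_of_recurrence (k : ℕ) {f : ℕ → ℕ → ℕ} {H : ℚ≥0[X]}
    (f_zero_left : ∀ m, (f 0 m : ℚ≥0) = chooseEval m H)
    (f_succ_zero : ∀ a, f (a + 1) 0 = 0)
    (f_succ_succ : ∀ a m, f (a + 1) (m + 1) =
      ∑ ij ∈ antidiagonal (a + 1), k.choose ij.1 * f ij.2 m) (a m : ℕ) :
    (f (a + 1) m : ℚ≥0) = chooseEval m (X * (runPoly k a * H)) := by
  induction a using Nat.strong_induction_on generalizing m with
  | _ a ih_a =>
  induction m with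
  | zero => rw [f_succ_zero, chooseEval_zero_X_mul, Nat.cast_zero]
  | succ m ih_m =>
    have f_step : f (a + 1) (m + 1) = f (a + 1) m + (k.choose (a + 1) * f 0 m +
        ∑ j ∈ Finset.range a, k.choose (a - j) * f (j + 1) m) := by
      rw [f_succ_succ, ← Finset.Nat.sum_antidiagonal_swap,
        Finset.Nat.sum_antidiagonal_eq_sum_range_succ_mk, Finset.sum_range_succ,
        Finset.sum_range_succ']
      simp only [Nat.add_sub_add_right, Prod.swap_prod_mk, tsub_zero, tsub_self,
        Nat.choose_zero_right, one_mul]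
      ring
    have runPoly_mul : runPoly k a * H = (k.choose (a + 1) : ℚ≥0[X]) * H +
        ∑ j ∈ Finset.range a, (k.choose (a - j) : ℚ≥0[X]) * (X * (runPoly k j * H)) := by
      rw [runPoly_eq, add_mul, mul_assoc, Finset.sum_mul, Finset.mul_sum]
      congr 1
      exact Finset.sum_congr rfl fun j _ => by ring
    rw [chooseEval_succ_X_mul, ← ih_m, runPoly_mul, map_add, map_sum, chooseEval_natCast_mul,
      ← f_zero_left, f_step]
    push_cast
    congr 2
    refine Finset.sum_congr rfl fun j hj => ?_
    rw [chooseEval_natCast_mul, ih_a j (Finset.mem_range.mp hj)]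

lemma runPoly_three_zero : runPoly 3 0 = 3 := by
  rw [runPoly_eq]; simp

lemma runPoly_three_one : runPoly 3 1 = 3 + 9 * X := by
  rw [runPoly_eq]
  simp only [Nat.choose, Finset.sum_range_one, runPoly_three_zero, tsub_zero]
  push_cast
  ring

lemma runPoly_three_two : runPoly 3 2 = 1 + 18 * X + 27 * X ^ 2 := by
  rw [runPoly_eq]
  simp only [Nat.choose, Finset.sum_range_succ, Finset.sum_range_zero, runPoly_three_zero,
    runPoly_three_one, tsub_zero, Nat.add_one_sub_one]
  push_cast
  ring

lemma runPoly_three_add_three (n : ℕ) :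
    runPoly 3 (n + 3) = X * (3 * runPoly 3 (n + 2) + 3 * runPoly 3 (n + 1) + runPoly 3 n) := by
  have far_terms : ∑ j ∈ Finset.range n,
      (Nat.choose 3 (n + 3 - j) : ℚ≥0[X]) * runPoly 3 j = 0 :=
    Finset.sum_eq_zero fun j hj => by
      have := Finset.mem_range.mp hj
      rw [Nat.choose_eq_zero_of_lt (by omega), Nat.cast_zero, zero_mul]
  have gap_two : n + 3 - (n + 1) = 2 := by omega
  have gap_one : n + 3 - (n + 2) = 1 := by omega
  rw [runPoly_eq, Nat.choose_eq_zero_of_lt (by omega), Finset.sum_range_succ,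
    Finset.sum_range_succ, Finset.sum_range_succ, far_terms, Nat.add_sub_cancel_left, gap_two,
    gap_one, Nat.choose_self, Nat.choose_succ_self_right, Nat.choose_one_right]
  push_cast
  ring

end RunPoly

section Words

variable {α : Type*}

lemma rep_succ (v : List α) (m : ℕ) : rep v (m + 1) = v ++ rep v m := by
  simp [rep, replicate_succ]

lemma head?_replicate_succ_append_ne {c d : α} (hcd : c ≠ d) (a : ℕ) (v : List α) :
    (replicate (a + 1) c ++ v).head? ≠ some d := by
  simpa [replicate_succ] using hcd

lemma exists_eq_replicate_append (c : α) (u : List α) :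
    ∃ (a : ℕ) (v : List α), v.head? ≠ some c ∧ u = replicate a c ++ v := by
  induction u with
  | nil => exact ⟨0, [], by simp, rfl⟩
  | cons b u ih =>
    by_cases hb : b = c
    · obtain ⟨a, v, hv, rfl⟩ := ih
      exact ⟨a + 1, v, hv, by rw [hb]; rfl⟩
    · exact ⟨0, b :: u, by simpa using hb, rfl⟩

lemma binaryWord_run_induction {P : List (Fin 2) → Prop} (nil : P [])
    (zeros : ∀ a, P (replicate (a + 1) 0))
    (ones_append : ∀ b v, v.head? ≠ some 1 → P v → P (replicate (b + 1) 1 ++ v))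
    (pair_append : ∀ a b v, v.head? ≠ some 1 → P v →
      P (replicate (a + 1) 0 ++ (replicate (b + 1) 1 ++ v))) (u : List (Fin 2)) : P u := by
  induction hn : u.length using Nat.strong_induction_on generalizing u with
  | _ n ih =>
  obtain ⟨a, u', hu', rfl⟩ := exists_eq_replicate_append 0 u
  obtain ⟨b, v, hv, rfl⟩ := exists_eq_replicate_append 1 u'
  simp only [length_append, length_replicate] at hn
  match a, b with
  | 0, b + 1 => exact ones_append b v hv (ih _ (by omega) v rfl)
  | a + 1, b + 1 => exact pair_append a b v hv (ih _ (by omega) v rfl)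
  | a, 0 =>
    obtain rfl : v = [] := by
      match v with
      | [] => rfl
      | 0 :: _ => exact absurd rfl hu'
      | 1 :: _ => exact absurd rfl hv
    cases a with
    | zero => exact nil
    | succ a => simpa using zeros a

end Words

section OccPoly

/-- The word `(0^k 1^l)^m`. -/
def blockWord (k l m : ℕ) : List (Fin 2) := rep (replicate k 0 ++ replicate l 1) m

/-- `IsOccPoly k l F u` says that `F` is the polynomial of the word `u`: its values under
`chooseEval m` are the numbers of occurrences of `u` in `(0^k 1^l)^m`. -/
def IsOccPoly (k l : ℕ) (F : ℚ≥0[X]) (u : List (Fin 2)) : Prop :=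
  ∀ m, (occ (blockWord k l m) u : ℚ≥0) = chooseEval m F

/-- The factor that a pair of runs `0^(a+1) 1^(b+1)` contributes to the polynomial of a word. The
term `X` in `1 + X` accounts for the occurrences whose runs of zeros and ones share no block. -/
noncomputable def pairPoly (k l a b : ℕ) : ℚ≥0[X] :=
  X * (1 + X) * (runPoly k a * runPoly l b)

variable {k l : ℕ} {u : List (Fin 2)} {F : ℚ≥0[X]}

lemma occ_blockWord_zero (hu : u ≠ []) : occ (blockWord k l 0) u = 0 := by
  obtain ⟨b, v, rfl⟩ := exists_cons_of_ne_nil hu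
  exact occ_nil_cons b v

lemma blockWord_succ (k l m : ℕ) :
    blockWord k l (m + 1) = replicate k 0 ++ (replicate l 1 ++ blockWord k l m) := by
  rw [blockWord, rep_succ, append_assoc, blockWord]

lemma isOccPoly_nil (k l : ℕ) : IsOccPoly k l 1 [] := fun m => by
  rw [occ_nil_right, chooseEval_one, Nat.cast_one]

lemma IsOccPoly.ones_append (hF : IsOccPoly k l F u) (hu : u.head? ≠ some 1) (b : ℕ) :
    IsOccPoly k l (X * (runPoly l b * F)) (replicate (b + 1) 1 ++ u) := by
  refine eq_chooseEval_runPoly_of_recurrence l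
    (f := fun j m => occ (blockWord k l m) (replicate j 1 ++ u)) (fun m => hF m)
    (fun j => occ_blockWord_zero (by simp)) (fun j m => ?_) b
  simp only [blockWord_succ]
  rw [occ_replicate_append_of_head?_ne (head?_replicate_succ_append_ne one_ne_zero j u),
    occ_replicate_append_replicate_append hu]

lemma isOccPoly_zeros_append (hu : u.head? ≠ some 0)
    (hF : ∀ m, (occ (replicate l 1 ++ blockWord k l m) u : ℚ≥0) = chooseEval m F) (a : ℕ) :
    IsOccPoly k l (X * (runPoly k a * F)) (replicate (a + 1) 0 ++ u) := by
  have skip_ones (j : ℕ) (v : List (Fin 2)) :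
      occ (replicate l 1 ++ v) (replicate (j + 1) 0 ++ u) = occ v (replicate (j + 1) 0 ++ u) :=
    occ_replicate_append_of_head?_ne (head?_replicate_succ_append_ne zero_ne_one j u) l v
  intro m
  rw [← skip_ones]
  refine eq_chooseEval_runPoly_of_recurrence k
    (f := fun j m => occ (replicate l 1 ++ blockWord k l m) (replicate j 0 ++ u)) hF
    (fun j => (skip_ones j _).trans (occ_blockWord_zero (by simp))) (fun j m => ?_) a m
  simp only [skip_ones, blockWord_succ]
  rw [occ_replicate_append_replicate_append hu]

lemma isOccPoly_zeros (k l a : ℕ) : IsOccPoly k l (X * runPoly k a) (replicate (a + 1) 0) := by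
  simpa using isOccPoly_zeros_append (k := k) (l := l) (u := []) (F := 1) (by simp)
    (fun m => by rw [occ_nil_right, chooseEval_one, Nat.cast_one]) a

lemma IsOccPoly.occ_ones_append_blockWord (hF : IsOccPoly k l F u) (hu : u.head? ≠ some 1)
    (b m : ℕ) :
    (occ (replicate l 1 ++ blockWord k l m) (replicate (b + 1) 1 ++ u) : ℚ≥0) =
      chooseEval m ((1 + X) * (runPoly l b * F)) := by
  have h := hF.ones_append hu b (m + 1)
  rw [blockWord_succ, occ_replicate_append_of_head?_ne
    (head?_replicate_succ_append_ne one_ne_zero b u), chooseEval_succ_X_mul] at h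
  rw [h, add_mul, one_mul, map_add, add_comm]

lemma IsOccPoly.pair_append (hF : IsOccPoly k l F u) (hu : u.head? ≠ some 1) (a b : ℕ) :
    IsOccPoly k l (pairPoly k l a b * F)
      (replicate (a + 1) 0 ++ (replicate (b + 1) 1 ++ u)) := by
  have h := isOccPoly_zeros_append (head?_replicate_succ_append_ne one_ne_zero b u)
    (hF.occ_ones_append_blockWord hu b) a
  convert h using 1
  rw [pairPoly]
  ring

lemma isOccPoly_rep_pair (k l a b r : ℕ) :
    IsOccPoly k l (pairPoly k l a b ^ r)
      (rep (replicate (a + 1) 0 ++ replicate (b + 1) 1) r) := by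
  induction r with
  | zero => exact isOccPoly_nil k l
  | succ r ih =>
    have head_ne : (rep (replicate (a + 1) (0 : Fin 2) ++ replicate (b + 1) 1) r).head? ≠
        some 1 := by
      cases r <;> simp [rep, replicate_succ]
    rw [pow_succ', rep_succ, append_assoc]
    exact ih.pair_append head_ne a b

end OccPoly

section PowDominated

variable {A : Type*} [CommSemiring A] [Algebra ℚ≥0 A]

/-- `p` is at most `g` times a combination of powers of `t` with nonnegative weights of sum at most
`s`. The combination is `aeval t c`, and "at most" is meant in the canonical order `x ≤ x + e` of
the semiring, which for polynomials is the coefficientwise one. -/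
def PowDominated (t g : A) (s : ℚ≥0) (p : A) : Prop :=
  ∃ (c : ℚ≥0[X]) (e : A), c.eval 1 ≤ s ∧ p + e = g * aeval t c

namespace PowDominated

variable {t g g' p p' : A} {s s' : ℚ≥0}

lemma refl (t g : A) : PowDominated t g 1 g := ⟨1, 0, by simp, by simp⟩

lemma base (t : A) : PowDominated t 1 1 t := ⟨X, 0, by simp, by simp⟩

lemma weight_mono (h : PowDominated t g s p) (hs : s ≤ s') : PowDominated t g s' p := by
  obtain ⟨c, e, hc, he⟩ := h
  exact ⟨c, e, hc.trans hs, he⟩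

lemma add (h : PowDominated t g s p) (h' : PowDominated t g s' p') :
    PowDominated t g (s + s') (p + p') := by
  obtain ⟨c, e, hc, he⟩ := h
  obtain ⟨c', e', hc', he'⟩ := h'
  refine ⟨c + c', e + e', by rw [eval_add]; exact add_le_add hc hc', ?_⟩
  rw [add_add_add_comm, he, he', map_add, mul_add]

lemma mul (h : PowDominated t g s p) (h' : PowDominated t g' s' p') :
    PowDominated t (g * g') (s * s') (p * p') := by
  obtain ⟨c, e, hc, he⟩ := h
  obtain ⟨c', e', hc', he'⟩ := h'
  refine ⟨c * c', p * e' + e * (p' + e'), by rw [eval_mul]; exact mul_le_mul' hc hc', ?_⟩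
  calc p * p' + (p * e' + e * (p' + e')) = (p + e) * (p' + e') := by ring
    _ = g * g' * aeval t (c * c') := by rw [he, he', map_mul]; ring

lemma trans (h : PowDominated t g s p) (h' : PowDominated t g' s' g) :
    PowDominated t g' (s' * s) p := by
  obtain ⟨c, e, hc, he⟩ := h
  obtain ⟨c', e', hc', he'⟩ := h'
  refine ⟨c' * c, e + e' * aeval t c, by rw [eval_mul]; exact mul_le_mul' hc' hc, ?_⟩
  calc p + (e + e' * aeval t c) = (g + e') * aeval t c := by rw [← add_assoc, he]; ring
    _ = g' * aeval t (c' * c) := by rw [he', map_mul, mul_assoc]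

lemma const_mul (h : PowDominated t g s p) (x : A) : PowDominated t (x * g) s (x * p) := by
  simpa using (refl t x).mul h

lemma smul (h : PowDominated t g s p) (x : ℚ≥0) : PowDominated t g (x * s) (x • p) := by
  obtain ⟨c, e, hc, he⟩ := h
  refine ⟨x • c, x • e, ?_, ?_⟩
  · rw [eval_smul, smul_eq_mul]
    exact mul_le_mul_right hc x
  · rw [← smul_add, he, map_smul, mul_smul_comm]

lemma natCast_mul (h : PowDominated t g s p) (n : ℕ) : PowDominated t g (n * s) (n * p) := by
  simpa [Nat.cast_smul_eq_nsmul, nsmul_eq_mul] using h.smul n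

lemma of_natCast_mul {n : ℕ} (hn : n ≠ 0) (h : PowDominated t g (n * s) (n * p)) :
    PowDominated t g s p := by
  have hn' : (n : ℚ≥0) ≠ 0 := Nat.cast_ne_zero.mpr hn
  have h' := h.smul (n : ℚ≥0)⁻¹
  rwa [← nsmul_eq_mul n p, ← Nat.cast_smul_eq_nsmul ℚ≥0, inv_smul_smul₀ hn',
    inv_mul_cancel_left₀ hn'] at h'

lemma map_le (h : PowDominated t 1 s p) (L : A →ₗ[ℚ≥0] ℚ≥0) {B : ℚ≥0}
    (hB : ∀ r, L (t ^ r) ≤ B) : L p ≤ s * B := by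
  obtain ⟨c, e, hc, he⟩ := h
  calc L p ≤ L (p + e) := by rw [map_add]; exact le_self_add
    _ = ∑ i ∈ Finset.range (c.natDegree + 1), c.coeff i * L (t ^ i) := by
      simp only [he, one_mul, aeval_eq_sum_range, map_sum, map_smul, smul_eq_mul]
    _ ≤ ∑ i ∈ Finset.range (c.natDegree + 1), c.coeff i * B := by
      gcongr with i
      exact hB i
    _ = c.eval 1 * B := by simp [eval_eq_sum_range, Finset.sum_mul]
    _ ≤ s * B := by gcongr

end PowDominated

end PowDominated

section BlocksOfThree

/-- The polynomial of `0011` with respect to the words `(000111)^m`. -/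
local notation "T" => pairPoly 3 3 1 1

lemma pairPoly_three_three_one_one : T = X * (1 + X) * (3 + 9 * X) ^ 2 := by
  rw [pairPoly, runPoly_three_one, sq]

lemma powDominated_X : PowDominated T 1 (1 / 9) X := by
  refine PowDominated.of_natCast_mul (n := 9) (by simp)
    ⟨X, 63 * X ^ 2 + 135 * X ^ 3 + 81 * X ^ 4, by simp, ?_⟩
  rw [aeval_X, pairPoly_three_three_one_one]
  push_cast
  ring

lemma powDominated_runPoly_two : PowDominated T (runPoly 3 1) 1 (runPoly 3 2) := by
  refine PowDominated.of_natCast_mul two_ne_zero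
    ⟨1 + X, 1 + 216 * X ^ 2 + 972 * X ^ 3 + 1458 * X ^ 4 + 729 * X ^ 5, by norm_num, ?_⟩
  rw [map_add, map_one, aeval_X, pairPoly_three_three_one_one, runPoly_three_one,
    runPoly_three_two]
  push_cast
  ring

lemma powDominated_X_mul_runPoly_one : PowDominated T 1 1 (X * runPoly 3 1) := by
  refine PowDominated.of_natCast_mul two_ne_zero
    ⟨1 + X, 1 + 3 * X + 45 * X ^ 2 + 135 * X ^ 3 + 81 * X ^ 4, by norm_num, ?_⟩
  rw [map_add, map_one, aeval_X, pairPoly_three_three_one_one, runPoly_three_one]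
  push_cast
  ring

lemma powDominated_runPoly (a : ℕ) : PowDominated T (runPoly 3 1) 1 (runPoly 3 a) := by
  induction a using Nat.strong_induction_on with
  | _ a ih =>
  match a, ih with
  | 0, _ => exact ⟨1, 9 * X, by simp, by rw [runPoly_three_zero, runPoly_three_one]; simp⟩
  | 1, _ => exact .refl _ _
  | 2, _ => exact powDominated_runPoly_two
  | n + 3, ih =>
    have seven : PowDominated T (runPoly 3 1) 7
        (3 * runPoly 3 (n + 2) + 3 * runPoly 3 (n + 1) + runPoly 3 n) := by
      convert (((ih (n + 2) (by omega)).natCast_mul 3).add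
        ((ih (n + 1) (by omega)).natCast_mul 3)).add (ih n (by omega)) using 1 <;>
        norm_num
    have seven_ninths := powDominated_X.mul seven
    rw [one_mul, ← runPoly_three_add_three] at seven_ninths
    exact seven_ninths.weight_mono (by norm_num [div_le_one])

lemma powDominated_X_mul_runPoly (a : ℕ) : PowDominated T 1 1 (X * runPoly 3 a) := by
  simpa using ((powDominated_runPoly a).const_mul X).trans powDominated_X_mul_runPoly_one

lemma powDominated_pairPoly (a b : ℕ) : PowDominated T 1 1 (pairPoly 3 3 a b) := by
  have pair_le : PowDominated T T (1 * 1) (pairPoly 3 3 a b) :=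
    ((powDominated_runPoly a).mul (powDominated_runPoly b)).const_mul (X * (1 + X))
  simpa using pair_le.trans (.base T)

lemma exists_isOccPoly_powDominated (u : List (Fin 2)) :
    ∃ F, IsOccPoly 3 3 F u ∧ PowDominated T 1 1 F := by
  induction u using binaryWord_run_induction with
  | nil => exact ⟨1, isOccPoly_nil 3 3, .refl _ 1⟩
  | zeros a => exact ⟨_, isOccPoly_zeros 3 3 a, powDominated_X_mul_runPoly a⟩
  | ones_append b v hv ih =>
    obtain ⟨F, hF, F_le⟩ := ih
    refine ⟨_, hF.ones_append hv b, ?_⟩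
    simpa [mul_assoc] using (powDominated_X_mul_runPoly b).mul F_le
  | pair_append a b v hv ih =>
    obtain ⟨F, hF, F_le⟩ := ih
    exact ⟨_, hF.pair_append hv a b, by simpa using (powDominated_pairPoly a b).mul F_le⟩

end BlocksOfThree

theorem stmt_15 (m : ℕ) :
    ∃ r : ℕ, occ (rep ([0, 0, 0, 1, 1, 1] : List (Fin 2)) m) (rep [0, 0, 1, 1] r) =
      maxocc (rep ([0, 0, 0, 1, 1, 1] : List (Fin 2)) m) := by
  have occ_rep (r : ℕ) : (occ (blockWord 3 3 m) (rep [0, 0, 1, 1] r) : ℚ≥0) =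
      chooseEval m (pairPoly 3 3 1 1 ^ r) := isOccPoly_rep_pair 3 3 1 1 r m
  obtain ⟨r, hr⟩ := exists_forall_occ_le (blockWord 3 3 m) (rep [0, 0, 1, 1])
  refine ⟨r, (maxocc_eq_of_forall_occ_le fun u => ?_).symm⟩
  obtain ⟨F, hF, F_le⟩ := exists_isOccPoly_powDominated u
  have occ_le : (occ (blockWord 3 3 m) u : ℚ≥0) ≤
      1 * occ (blockWord 3 3 m) (rep [0, 0, 1, 1] r) := by
    rw [hF m]
    exact F_le.map_le (chooseEval m) fun s => by rw [← occ_rep]; exact_mod_cast hr s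
  rw [one_mul] at occ_le
  exact_mod_cast occ_le
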